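/- Every eigenvalue of the partial integral operator T₁ has infinite multiplicity: for every λ ∈ ℝ, if the eigenspace ker(T₁ − λE) is nonzero, then it is infinite-dimensional. -/

import Mathlib

open MeasureTheory Complex

noncomputable section

/-- The measure on `ℝ` given by restricting Lebesgue measure to `[a,b]`. -/
abbrev muI (a b : ℝ) : MeasureTheory.Measure ℝ :=
  MeasureTheory.volume.restrict (Set.Icc a b)

/-!
An operator that integrates in `x` alone commutes with multiplication by every bounded function of
`y`. Choose such a function `g` which is injective. Lebesgue measure has no atoms, so `g` avoids the
finitely many roots of any nonzero polynomial `P` almost everywhere, and `P(g) f ≠ 0` whenever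
`f ≠ 0`. An eigenspace containing `f ≠ 0` therefore contains the infinite-dimensional space of all
`P(g) f`.
-/

open Polynomial Module.End
open scoped ENNReal

section LinearAlgebra

variable {K V : Type*} [Field K] [AddCommGroup V] [Module K V]

theorem not_finiteDimensional_of_invariant_of_aeval_ne_zero {M : Module.End K V}
    {W : Submodule K V} (hW : W ≤ W.comap M) {v : V} (hv : v ∈ W)
    (hMv : ∀ P : K[X], P ≠ 0 → aeval M P v ≠ 0) : ¬ FiniteDimensional K W := by
  intro hfin
  let orbit : K[X] →ₗ[K] W :=
    ((LinearMap.applyₗ v).comp (aeval M).toLinearMap).codRestrict W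
      fun P => aeval_apply_smul_mem_of_le_comap hv P M hW
  have orbit_injective : Function.Injective orbit := by
    refine (injective_iff_map_eq_zero orbit).mpr fun P hP => ?_
    contrapose! hP
    exact fun h => hMv P hP (congrArg Subtype.val h)
  exact Polynomial.not_finite (Module.Finite.of_injective orbit orbit_injective)

end LinearAlgebra

theorem ae_eval_ne_zero {α R : Type*} [MeasurableSpace α] {μ : Measure α} [CommRing R] [IsDomain R]
    {m : α → R} (hm : ∀ c, ∀ᵐ x ∂μ, m x ≠ c) {P : R[X]} (hP : P ≠ 0) :
    ∀ᵐ x ∂μ, P.eval (m x) ≠ 0 := by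
  have avoids_roots : ∀ᵐ x ∂μ, ∀ c ∈ {c | P.IsRoot c}, m x ≠ c :=
    (Filter.eventually_all_finite (finite_setOfPred_isRoot hP)).mpr fun c _ => hm c
  filter_upwards [avoids_roots] with x hx hroot
  exact hx (m x) hroot rfl

section Multiplication

variable {α 𝕜 E : Type*} [MeasurableSpace α] {μ : Measure α} {p : ℝ≥0∞}
  [NontriviallyNormedField 𝕜] [NormedAddCommGroup E] [NormedSpace 𝕜 E]

/-- Multiplication by an essentially bounded function `m`, as an endomorphism of `L^p`. No lower
bound on `p` is imposed, so it is a linear map rather than a continuous one. -/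
def mulOperator (m : Lp 𝕜 ∞ μ) : Module.End 𝕜 (Lp E p μ) :=
  (ContinuousLinearMap.lsmul 𝕜 𝕜).holderₗ μ ∞ p p m

theorem coeFn_mulOperator (m : Lp 𝕜 ∞ μ) (f : Lp E p μ) :
    mulOperator m f =ᵐ[μ] fun x => m x • f x :=
  (ContinuousLinearMap.lsmul 𝕜 𝕜).coeFn_holder m f

theorem coeFn_aeval_mulOperator (m : Lp 𝕜 ∞ μ) (P : 𝕜[X]) (f : Lp E p μ) :
    aeval (mulOperator m) P f =ᵐ[μ] fun x => P.eval (m x) • f x := by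
  induction P using Polynomial.induction_on generalizing f with
  | C c => simpa only [aeval_C, Module.algebraMap_end_apply, eval_C] using! Lp.coeFn_smul c f
  | add P Q hP hQ =>
    rw [map_add, LinearMap.add_apply]
    filter_upwards [Lp.coeFn_add (aeval (mulOperator m) P f) (aeval (mulOperator m) Q f),
      hP f, hQ f] with x hsum hPx hQx
    rw [hsum, Pi.add_apply, hPx, hQx, eval_add, add_smul]
  | monomial k c hk =>
    rw [pow_succ, ← mul_assoc, map_mul, aeval_X, Module.End.mul_apply]
    filter_upwards [hk (mulOperator m f), coeFn_mulOperator m f] with x hkx hmx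
    rw [hkx, hmx, smul_smul, eval_mul_X]

theorem aeval_mulOperator_injective {m : Lp 𝕜 ∞ μ} (hm : ∀ c, ∀ᵐ x ∂μ, m x ≠ c)
    {P : 𝕜[X]} (hP : P ≠ 0) :
    Function.Injective (aeval (mulOperator m : Module.End 𝕜 (Lp E p μ)) P) := by
  refine (injective_iff_map_eq_zero _).mpr fun f hf => (Lp.eq_zero_iff_ae_eq_zero).mpr ?_
  have product_eq_zero := coeFn_aeval_mulOperator m P f
  rw [hf] at product_eq_zero
  filter_upwards [product_eq_zero, Lp.coeFn_zero E p μ, ae_eval_ne_zero hm hP] with x hx h0 hPx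
  exact (smul_eq_zero.mp (hx.symm.trans h0)).resolve_left hPx

theorem not_finiteDimensional_eigenspace_of_commute_mulOperator {m : Lp 𝕜 ∞ μ}
    (hm : ∀ c, ∀ᵐ x ∂μ, m x ≠ c) {T : Module.End 𝕜 (Lp E p μ)}
    (hT : Commute T (mulOperator m)) {c : 𝕜} (hc : T.HasEigenvalue c) :
    ¬ FiniteDimensional 𝕜 (T.eigenspace c) := by
  obtain ⟨f, hf⟩ := hc.exists_hasEigenvector
  exact not_finiteDimensional_of_invariant_of_aeval_ne_zero
    (mapsTo_genEigenspace_of_comm hT c 1) hf.1 fun P hP =>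
      (map_ne_zero_iff _ (aeval_mulOperator_injective hm hP)).mpr hf.2

end Multiplication

section PartialIntegral

variable {X Y 𝕜 E : Type*} [MeasurableSpace X] [MeasurableSpace Y] {μ : Measure X}
  {ν : Measure Y} {p : ℝ≥0∞} [NontriviallyNormedField 𝕜] [NormedAddCommGroup E]
  [NormedSpace 𝕜 E] [NormedSpace ℝ E]

/-- `T` is the partial integral operator `(T f)(x, y) = ∫ K(x, y; s) f(s, y) dμ(s)`, which
integrates in the first variable only. The integral is a Bochner integral, hence `0` wherever the
integrand fails to be integrable. -/
def IsPartialIntegralOperator (K : X × Y → X → 𝕜) (T : Module.End 𝕜 (Lp E p (μ.prod ν))) : Prop :=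
  ∀ f, T f =ᵐ[μ.prod ν] fun z => ∫ s, K z s • f (s, z.2) ∂μ

theorem ae_prod_ae_of_ae_prod [SFinite μ] [SFinite ν] {q : X × Y → Prop}
    (hq : ∀ᵐ z ∂μ.prod ν, q z) : ∀ᵐ z ∂μ.prod ν, ∀ᵐ s ∂μ, q (s, z.2) :=
  Measure.quasiMeasurePreserving_snd.ae <| Measure.ae_ae_of_ae_prod <|
    (Measure.measurePreserving_swap (μ := ν) (ν := μ)).quasiMeasurePreserving.ae hq

theorem IsPartialIntegralOperator.commute_mulOperator [SFinite μ] [SFinite ν]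
    [SMulCommClass ℝ 𝕜 E] {K : X × Y → X → 𝕜} {T : Module.End 𝕜 (Lp E p (μ.prod ν))}
    (hT : IsPartialIntegralOperator K T) {g : Y → 𝕜} {m : Lp 𝕜 ∞ (μ.prod ν)}
    (hm : m =ᵐ[μ.prod ν] fun z => g z.2) : Commute T (mulOperator m) := by
  have coeFn_mul (f : Lp E p (μ.prod ν)) :
      ∀ᵐ z ∂μ.prod ν, mulOperator m f z = g z.2 • f z := by
    filter_upwards [coeFn_mulOperator m f, hm] with z hz hmz
    rw [hz, hmz]
  refine LinearMap.ext fun f => Lp.ext ?_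
  filter_upwards [ae_prod_ae_of_ae_prod (coeFn_mul f), hT f, hT (mulOperator m f),
    coeFn_mul (T f)] with z hslice hTf hTmf hmTf
  calc T (mulOperator m f) z
      = ∫ s, K z s • mulOperator m f (s, z.2) ∂μ := hTmf
    _ = ∫ s, g z.2 • K z s • f (s, z.2) ∂μ := by
        refine integral_congr_ae ?_
        filter_upwards [hslice] with s hs
        rw [hs, smul_comm]
    _ = g z.2 • T f z := by rw [integral_smul, hTf]
    _ = mulOperator m (T f) z := hmTf.symm

end PartialIntegral

theorem exists_measurable_injective_norm_le_one (Y 𝕜 : Type*) [MeasurableSpace Y]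
    [StandardBorelSpace Y] [RCLike 𝕜] :
    ∃ g : Y → 𝕜, Measurable g ∧ Function.Injective g ∧ ∀ y, ‖g y‖ ≤ 1 := by
  have he := measurableEmbedding_sigmoid_comp_embeddingReal Y
  set e : Y → unitInterval := unitInterval.sigmoid ∘ embeddingReal Y
  refine ⟨fun y => ((e y : ℝ) : 𝕜), ?_, ?_, fun y => ?_⟩
  · exact RCLike.measurable_ofReal.comp (measurable_subtype_coe.comp he.measurable)
  · exact RCLike.ofReal_injective.comp (Subtype.val_injective.comp he.injective)
  · rw [RCLike.norm_ofReal, abs_of_nonneg (e y).2.1]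
    exact (e y).2.2

theorem ae_ne_of_injective {Y β : Type*} [MeasurableSpace Y] {ν : Measure Y}
    [NullSingletonClass ν] {g : Y → β} (hg : Function.Injective g) (c : β) :
    ∀ᵐ y ∂ν, g y ≠ c := by
  have fiber_null : ν (g ⁻¹' {c}) = 0 :=
    (Set.subsingleton_singleton.preimage hg).measure_zero ν
  exact measure_eq_zero_iff_ae_notMem.mp fiber_null

theorem statement3_general {X Y 𝕜 E : Type*} [MeasurableSpace X] [MeasurableSpace Y]
    [StandardBorelSpace Y] {μ : Measure X} [SFinite μ] {ν : Measure Y} [SFinite ν]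
    [NullSingletonClass ν] [RCLike 𝕜] [NormedAddCommGroup E] [NormedSpace 𝕜 E] [NormedSpace ℝ E]
    [SMulCommClass ℝ 𝕜 E] [CompleteSpace E] {p : ℝ≥0∞} {K : X × Y → X → 𝕜}
    {T : Module.End 𝕜 (Lp E p (μ.prod ν))} (hT : IsPartialIntegralOperator K T)
    {c : 𝕜} (hc : T.HasEigenvalue c) : ¬ FiniteDimensional 𝕜 (T.eigenspace c) := by
  obtain ⟨g, g_measurable, g_injective, g_le_one⟩ := exists_measurable_injective_norm_le_one Y 𝕜
  have g_memLp : MemLp (fun z : X × Y => g z.2) ∞ (μ.prod ν) :=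
    memLp_top_of_bound (g_measurable.comp measurable_snd).aestronglyMeasurable 1
      (.of_forall fun z => g_le_one z.2)
  refine not_finiteDimensional_eigenspace_of_commute_mulOperator (m := g_memLp.toLp) (fun r => ?_)
    (hT.commute_mulOperator g_memLp.coeFn_toLp) hc
  filter_upwards [g_memLp.coeFn_toLp,
    Measure.quasiMeasurePreserving_snd.ae (ae_ne_of_injective g_injective r)] with z hz hne
  rwa [hz]

theorem statement3
    (a b c d : ℝ) (hab : a < b) (hcd : c < d)
    (n : ℕ) (hn : 1 ≤ n)
    (φ : Fin n → ℝ → ℂ)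
    (hφL2 : ∀ k, MemLp (φ k) 2 (muI a b))
    (hφON : ∀ i j, ∫ x, star (φ i x) * φ j x ∂(muI a b) = if i = j then 1 else 0)
    (h : Fin n → ℝ → ℝ)
    (hhmeas : ∀ k, Measurable (h k))
    (hhbdd : ∀ k, ∃ C : ℝ, ∀ᵐ y ∂(muI c d), |h k y| ≤ C)
    (T1 : Lp ℂ 2 ((muI a b).prod (muI c d)) →L[ℂ] Lp ℂ 2 ((muI a b).prod (muI c d)))
    (hT1sa : IsSelfAdjoint T1)
    (hT1 : ∀ f : Lp ℂ 2 ((muI a b).prod (muI c d)),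
      ∀ᵐ z ∂((muI a b).prod (muI c d)),
        T1 f z = ∫ s, (∑ k, φ k z.1 * star (φ k s) * (h k z.2 : ℂ)) * f (s, z.2) ∂(muI a b)) :
    ∀ lam : ℝ,
      LinearMap.ker (T1 - (lam : ℂ) • (1 : Lp ℂ 2 ((muI a b).prod (muI c d)) →L[ℂ]
          Lp ℂ 2 ((muI a b).prod (muI c d)))).toLinearMap ≠ ⊥ →
      ¬ FiniteDimensional ℂ
        ↥(LinearMap.ker (T1 - (lam : ℂ) • (1 : Lp ℂ 2 ((muI a b).prod (muI c d)) →L[ℂ]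
          Lp ℂ 2 ((muI a b).prod (muI c d)))).toLinearMap) := by
  intro lam
  have infinite_multiplicity := statement3_general (T := T1.toLinearMap) (c := (lam : ℂ)) hT1
  rwa [hasEigenvalue_iff, eigenspace_def] at infinite_multiplicity
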